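/- arXiv:2602.20358 — 2 statements merged into one kernel-verified Lean document; each statement's English description precedes it below -/
import Mathlib

section
/- Let A and P be finite sets with |A| = |P| = c ≥ 2, and let Z ⊆ A × P with |Z| ≤ 2c − 2. Suppose every a ∈ A occurs in at least one pair of Z and every p ∈ P occurs in at least one pair of Z. Then there exist a ∈ A and p ∈ P such that a occurs in exactly one pair of Z, p occurs in exactly one pair of Z, and (a,p) ∉ Z. -/
theorem aux_two_ones {A : Type*} [Fintype A] (f : A → ℕ) (h1 : ∀ a, 1 ≤ f a)
    (hc : 2 ≤ Fintype.card A) (hs : ∑ a, f a ≤ 2 * Fintype.card A - 2) :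
    1 < (Finset.univ.filter (fun a => f a = 1)).card := by
  have h : ∑ _a : A, 2 ≤ ∑ a, (f a + if f a = 1 then 1 else 0) := by
    apply Finset.sum_le_sum
    intro a _
    have := h1 a
    split_ifs <;> omega
  rw [Finset.sum_add_distrib, ← Finset.card_filter] at h
  simp only [Finset.sum_const, Finset.card_univ, smul_eq_mul] at h
  omega

/-- Combinatorial core of Proposition `lower-bound-iid`: if `|A| = |P| = c ≥ 2`,
`Z ⊆ A × P` has at most `2c − 2` elements, and every applicant and every position
occurs in at least one pair of `Z`, then there exist an applicant `a` and a position
`p` each occurring in exactly one pair of `Z`, with `(a, p) ∉ Z`. -/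
theorem stmt_11 {A P : Type*} [Fintype A] [Fintype P] [DecidableEq A] [DecidableEq P]
    (c : ℕ) (hc : 2 ≤ c) (hA : Fintype.card A = c) (hP : Fintype.card P = c)
    (Z : Finset (A × P)) (hZ : Z.card ≤ 2 * c - 2)
    (hAcov : ∀ a : A, ∃ p : P, (a, p) ∈ Z)
    (hPcov : ∀ p : P, ∃ a : A, (a, p) ∈ Z) :
    ∃ a : A, ∃ p : P,
      (Z.filter (fun z => z.1 = a)).card = 1 ∧
      (Z.filter (fun z => z.2 = p)).card = 1 ∧
      (a, p) ∉ Z := by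
  have eA : Z.card = ∑ a : A, (Z.filter (fun z => z.1 = a)).card :=
    Finset.card_eq_sum_card_fiberwise (fun _ _ => by simp)
  have eP : Z.card = ∑ p : P, (Z.filter (fun z => z.2 = p)).card :=
    Finset.card_eq_sum_card_fiberwise (fun _ _ => by simp)
  have kA := aux_two_ones (fun a : A => (Z.filter (fun z => z.1 = a)).card)
    (fun a => by
      obtain ⟨p, hp⟩ := hAcov a
      exact Finset.card_pos.mpr ⟨(a, p), by simp [hp]⟩) (by omega) (by rw [← eA]; omega)
  have kP := aux_two_ones (fun p : P => (Z.filter (fun z => z.2 = p)).card)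
    (fun p => by
      obtain ⟨a, ha⟩ := hPcov p
      exact Finset.card_pos.mpr ⟨(a, p), by simp [ha]⟩) (by omega) (by rw [← eP]; omega)
  obtain ⟨a, ha, b, hb, hab⟩ := Finset.one_lt_card.mp kA
  obtain ⟨p, hp, -⟩ := Finset.one_lt_card.mp kP
  simp only [Finset.mem_filter, Finset.mem_univ, true_and] at ha hb hp
  by_cases h : (a, p) ∈ Z
  · refine ⟨b, p, hb, hp, fun h' => hab ?_⟩
    have := Finset.card_le_one.mp hp.le (a, p) (by simp [h]) (b, p) (by simp [h'])
    exact congrArg Prod.fst this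
  · exact ⟨a, p, ha, hp, h⟩
end

section
/- Let 𝒜 and 𝒫 be finite disjoint sets, Z ⊆ 𝒜 × 𝒫, and let v : 𝒜 × 𝒫 → ℝ, u : 𝒫 × 𝒜 → ℝ be interim-utility functions for which there are constants V and U with v(a,p) = V and u(p,a) = U for every pair (a,p) ∉ Z. Let μ be a matching in which every matched pair belongs to Z. Suppose a ∈ 𝒜 occurs in exactly one pair (a, p₀) of Z and v(a, p₀) < V, suppose p ∈ 𝒫 occurs in exactly one pair (a₁, p) of Z and u(p, a₁) < U, and suppose (a, p) ∉ Z. Then (a, p) is a blocking pair for μ; in particular μ is not interim stable given Z. -/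
/-- A matching on disjoint sets of applicants `A` and positions `P`: each applicant is
matched to a position or to herself, each position to an applicant or to itself, and
the matching is involutive. -/
def IsMatching {A P : Type*} (μ : A ⊕ P → A ⊕ P) : Prop :=
  (∀ a : A, (∃ p : P, μ (Sum.inl a) = Sum.inr p) ∨ μ (Sum.inl a) = Sum.inl a) ∧
  (∀ p : P, (∃ a : A, μ (Sum.inr p) = Sum.inl a) ∨ μ (Sum.inr p) = Sum.inr p) ∧
  (∀ x, μ (μ x) = x)

/-- `(a, p)` is a blocking pair for `μ` with respect to interim utilities `v`, `u`:
they are not matched to each other, `a` is unmatched or strictly prefers `p` to her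
match, and `p` is unmatched or strictly prefers `a` to its match. -/
def IsBlockingPair {A P : Type*} (μ : A ⊕ P → A ⊕ P)
    (v : A → P → ℝ) (u : P → A → ℝ) (a : A) (p : P) : Prop :=
  μ (Sum.inl a) ≠ Sum.inr p ∧
  (μ (Sum.inl a) = Sum.inl a ∨ ∃ p', μ (Sum.inl a) = Sum.inr p' ∧ v a p > v a p') ∧
  (μ (Sum.inr p) = Sum.inr p ∨ ∃ a', μ (Sum.inr p) = Sum.inl a' ∧ u p a > u p a')

/-- `μ` is a stable matching with respect to `v`, `u`. -/
def IsStable {A P : Type*} (μ : A ⊕ P → A ⊕ P)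
    (v : A → P → ℝ) (u : P → A → ℝ) : Prop :=
  IsMatching μ ∧ ∀ a p, ¬ IsBlockingPair μ v u a p

/-- `μ` is interim stable given a set `Z` of interviewed pairs: it is a stable matching
and every matched pair has interviewed. -/
def InterimStable {A P : Type*} (μ : A ⊕ P → A ⊕ P) (Z : Set (A × P))
    (v : A → P → ℝ) (u : P → A → ℝ) : Prop :=
  IsMatching μ ∧ (∀ a p, μ (Sum.inl a) = Sum.inr p → (a, p) ∈ Z) ∧
  ∀ a p, ¬ IsBlockingPair μ v u a p

/-- The sufficient condition for interim instability used in Proposition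
`lower-bound-iid`: in an ex-ante equivalent setting, if applicant `a` has exactly one
interview `(a, p₀)` with realized value below the prior `V`, position `p` has exactly
one interview `(a₁, p)` with realized value below the prior `U`, and `a` and `p` did
not interview each other, then `(a, p)` is a blocking pair for any matching `μ` all of
whose matched pairs interviewed; in particular `μ` is not interim stable given `Z`. -/
theorem stmt_16 {A P : Type*} [Fintype A] [Fintype P]
    (Z : Set (A × P)) (v : A → P → ℝ) (u : P → A → ℝ)
    (V U : ℝ)
    (hvV : ∀ a : A, ∀ p : P, (a, p) ∉ Z → v a p = V)
    (huU : ∀ a : A, ∀ p : P, (a, p) ∉ Z → u p a = U)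
    (μ : A ⊕ P → A ⊕ P) (hμ : IsMatching μ)
    (hμZ : ∀ a p, μ (Sum.inl a) = Sum.inr p → (a, p) ∈ Z)
    (a : A) (p₀ : P) (hap₀ : (a, p₀) ∈ Z)
    (ha1 : ∀ p' : P, (a, p') ∈ Z → p' = p₀)
    (hva : v a p₀ < V)
    (p : P) (a₁ : A) (ha₁p : (a₁, p) ∈ Z)
    (hp1 : ∀ a' : A, (a', p) ∈ Z → a' = a₁)
    (hup : u p a₁ < U)
    (hnotZ : (a, p) ∉ Z) :
    IsBlockingPair μ v u a p ∧ ¬ InterimStable μ Z v u := by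
  have hb : IsBlockingPair μ v u a p := by
    obtain ⟨h1, h2, h3⟩ := hμ
    refine ⟨fun h => hnotZ (hμZ a p h), ?_, ?_⟩
    · rcases h1 a with ⟨q, hq⟩ | h
      · refine Or.inr ⟨q, hq, ?_⟩
        rw [ha1 q (hμZ a q hq), hvV a p hnotZ]
        exact hva
      · exact Or.inl h
    · rcases h2 p with ⟨b, hb⟩ | h
      · refine Or.inr ⟨b, hb, ?_⟩
        have hb2 : μ (Sum.inl b) = Sum.inr p := by rw [← hb, h3]
        rw [hp1 b (hμZ b p hb2), huU a p hnotZ]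
        exact hup
      · exact Or.inl h
  exact ⟨hb, fun h => h.2.2 a p hb⟩
end
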